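/- Let k ≥ 4 be a real number and let H be a finite bipartite graph such that the degree of every vertex of H lies in the interval [k+1, k⁴ − 2k² − 1]. Then T̃_H(2,0) · T̃_H(0,2) ≥ T̃_H(1,1)² = 1. -/

import Mathlib

open scoped Classical

/-- The permutation Tutte polynomial of a bipartite graph `G` on finite vertex set `V`
with bipartition class `A` (the other class being `Aᶜ`). -/
noncomputable def permTutte {V : Type*} [Fintype V] [DecidableEq V]
    (G : SimpleGraph V) (A : Set V) (x y : ℝ) : ℝ :=
  ((Fintype.card V).factorial : ℝ)⁻¹ *
    ∑ π : V ≃ Fin (Fintype.card V),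
      x ^ Nat.card {i : V // i ∈ A ∧ ∀ j, G.Adj i j → π j < π i} *
      y ^ Nat.card {j : V // j ∉ A ∧ ∀ i, G.Adj j i → π i < π j}

/-- `G` is bipartite with parts `A` and `Aᶜ`. -/
def IsBipartition {V : Type*} (G : SimpleGraph V) (A : Set V) : Prop :=
  ∀ u v, G.Adj u v → (u ∈ A ↔ v ∉ A)


theorem num1 (t s : ℝ) (ht0 : 0 < t) (ht : t ≤ 1/4) (h1 : t + t^2 ≤ s) (h2 : s ≤ 1) :
   (s+t^2)*(1-(t^2)^2) + t^2*(1-t^2)^2 ≤ (s+t^2)*((1+s+s^2/2)*(1-2*t^2-s*t^2)) := by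
  obtain ⟨e, rfl⟩ : ∃ e, s = t+t^2+e := ⟨s-t-t^2, by ring⟩
  have he : 0 ≤ e := by linarith
  set s := t+t^2+e with hs
  have hs0 : 0 ≤ s := by positivity
  have hu : t^2 ≤ 1/16 := by nlinarith
  have hB : s - 3*s*t^2 - 2*t^2 + s^2*(11/32) ≤ (1+s+s^2/2)*(1-2*t^2-s*t^2) - (1-(t^2)^2) := by
    have : 0 ≤ s^2*(1/16-t^2) := mul_nonneg (by positivity) (by linarith)
    have : 0 ≤ s^2*(1-s)*t^2 := by have : 0 ≤ 1 - s := by linarith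
                                   positivity
    nlinarith [sq_nonneg (t^2)]
  have hC : t^2*(1-t^2)^2 ≤ (s+t^2)*(s - 3*s*t^2 - 2*t^2 + s^2*(11/32)) := by
    have e1 : 0 ≤ 1/4 - t := by linarith
    have h0 : t^2*(1-t^2)^2 ≤ 11/32*(t+t^2)^3 + (1-85/32*t^2)*(t+t^2)^2 - (t^2+3*t^4)*(t+t^2) - 2*t^4 := by
      have h5 : 0 ≤ (43/32 - 13/8*t - (233/32)*t^2 - (202/32) * t^3) := by
        have : t^3 ≤ 1/64 := by nlinarith
        nlinarith
      have : 0 ≤ t^3 * (43/32 - 13/8*t - (233/32)*t^2 - (202/32) * t^3) := by positivity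
      nlinarith [this]
    have h1 : 0 ≤ e * (11/32*(s^2+s*(t+t^2)+(t+t^2)^2) + (1-85/32*t^2)*(s+(t+t^2)) - (t^2+3*t^4)) := by
      apply mul_nonneg he
      have : 0 ≤ (5/6-85/32*t^2)*(s+(t+t^2)) := by
        apply mul_nonneg <;> [nlinarith; positivity]
      have : 0 ≤ 11/32*(s^2+s*(t+t^2)+(t+t^2)^2) := by positivity
      have : t^4 ≤ 1/16*t^2 := by nlinarith [sq_nonneg t]
      nlinarith
    have : (s+t^2)*(s - 3*s*t^2 - 2*t^2 + s^2*(11/32)) = (11/32*(t+t^2)^3 + (1-85/32*t^2)*(t+t^2)^2 - (t^2+3*t^4)*(t+t^2) - 2*t^4) + e * (11/32*(s^2+s*(t+t^2)+(t+t^2)^2) + (1-85/32*t^2)*(s+(t+t^2)) - (t^2+3*t^4)) := by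
      rw [hs]; ring
    linarith
  have := mul_le_mul_of_nonneg_left hB (by positivity : 0 ≤ s+t^2)
  nlinarith

theorem num2 (u s : ℝ) (hu : 0 < u) (hu1 : u ≤ 1/16) (hs : 1 ≤ s) (hz : u^2 ≤ 1-2*u-s*u) :
   17/16 ≤ (1+s+s^2/2+s^3/6)*(1-2*u-s*u) := by
  obtain ⟨z, hz'⟩ : ∃ z, z = 1-2*u-s*u := ⟨_, rfl⟩
  rw [← hz'] at hz ⊢
  have hz0 : 0 < z := lt_of_lt_of_le (pow_pos hu 2) hz
  by_cases c1 : 1/2 ≤ z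
  · have : 1 ≤ s^2 := by nlinarith
    have : 1 ≤ s^3 := by nlinarith
    nlinarith
  by_cases c2 : 1/10 ≤ z
  · have : 6 ≤ s := by nlinarith
    have : 36 ≤ s^2 := by nlinarith
    have : 0 ≤ s^3 := by positivity
    nlinarith
  · have h1 : 3/4 ≤ s*u := by nlinarith
    have h2 : 12 ≤ s := by nlinarith
    have h3 : 9/16 ≤ s^2*z := by
      have : s^2*u^2 ≤ s^2*z := by gcongr
      nlinarith
    have : 12*(9/16) ≤ s*(s^2*z) := by gcongr
    have : 0 ≤ s*z := by positivity
    nlinarith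

theorem num3 (u : ℝ) (hu : 0 < u) (hu1 : u ≤ 1/16) (d : ℕ) :
   (1-u)^d * (1+d*u+(d*u)^2/2+(d*u)^3/6) ≤ 1 := by
  induction d with
  | zero => simp
  | succ n ih =>
    have : (1-u) * (1+((n+1:ℕ):ℝ)*u+(((n+1:ℕ):ℝ)*u)^2/2+(((n+1:ℕ):ℝ)*u)^3/6) ≤ (1+n*u+(n*u)^2/2+(n*u)^3/6) := by
      push_cast
      have hn : (0:ℝ) ≤ n := n.cast_nonneg
      have : (1+n*u+(n*u)^2/2+(n*u)^3/6) - (1-u) * (1+((n:ℝ)+1)*u+(((n:ℝ)+1)*u)^2/2+(((n:ℝ)+1)*u)^3/6) = u^2*(1/2) + u^3*(n/2+1/3) + u^4*(n+1)^3/6 := by ring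
      have : 0 ≤ u^2*(1/2) + u^3*(n/2+1/3) + u^4*((n:ℝ)+1)^3/6 := by positivity
      linarith
    have h2 := mul_le_mul_of_nonneg_left this (pow_nonneg (by linarith : 0 ≤ 1-u) n)
    rw [pow_succ]; linarith

theorem num4 (k : ℝ) (hk : 4 ≤ k) (d : ℕ) (h1 : k+1 ≤ d) (h2 : (d:ℝ) ≤ k^4-2*k^2-1) (u : ℝ) (hu : u = 1/k^2) :
  1 ≤ (1 + (u + (1-u)*(1/((d:ℝ)+1)))) * ((1-u) * (1 - (1-u)^d*(1/((d:ℝ)+1)))) := by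
  have hk0 : 0 < k := by linarith
  obtain ⟨t, ht⟩ : ∃ t, t = 1/k := ⟨_, rfl⟩
  have hkt : k*t = 1 := by rw [ht]; field_simp
  have hut : u = t^2 := by rw [hu, ht]; field_simp
  have ht0 : 0 < t := by rw [ht]; positivity
  have ht4 : t ≤ 1/4 := by nlinarith
  have hu0 : 0 < u := by rw [hut]; positivity
  have hu1 : u ≤ 1/16 := by rw [hut]; nlinarith
  have hku : k^2*u = 1 := by rw [hu]; field_simp
  obtain ⟨s, hs⟩ : ∃ s, s = (d:ℝ)*u := ⟨_, rfl⟩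
  have hs1 : t + t^2 ≤ s := by
    have : (k+1)*u ≤ s := by rw [hs]; gcongr
    have e : (k+1)*u = t*(k*t) + t^2 := by rw [hut]; ring
    rw [e, hkt] at this; linarith
  have hz : u^2 ≤ 1-2*u-s*u := by
    have : (d:ℝ)*u^2 ≤ (k^4-2*k^2-1)*u^2 := by gcongr
    have e : (k^4-2*k^2-1)*u^2 = (k^2*u)^2 - 2*(k^2*u)*u - u^2 := by ring
    rw [e, hku] at this
    rw [hs]; linarith
  have hW := num3 u hu0 hu1 d
  rw [← hs] at hW
  have hs0 : 0 < s := by nlinarith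
  have key : (s+u)*(1-u^2) + u*(1-u)^2 ≤ (s+u)*((1+s+s^2/2+s^3/6)*(1-2*u-s*u)) := by
    have hz0 : 0 ≤ 1-2*u-s*u := le_trans (by positivity) hz
    by_cases c : s ≤ 1
    · have := num1 t s ht0 ht4 hs1 c
      rw [← hut] at this
      have : 0 ≤ (s+u)*(s^3/6*(1-2*u-s*u)) := by positivity
      linarith
    · have := num2 u s hu0 hu1 (by linarith) hz
      have : (s+u)*(17/16) ≤ (s+u)*((1+s+s^2/2+s^3/6)*(1-2*u-s*u)) := by gcongr
      nlinarith
  have hq : 0 < (1-u)^d := pow_pos (by linarith) d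
  -- q * (...) ≤ 1-2u-su
  have h6 : (1-u)^d * ((s+u)*(1-u^2) + u*(1-u)^2) ≤ (s+u)*(1-2*u-s*u) := by
    have hz0 : 0 ≤ 1-2*u-s*u := le_trans (by positivity) hz
    calc _ ≤ (1-u)^d * ((s+u)*((1+s+s^2/2+s^3/6)*(1-2*u-s*u))) := by gcongr
      _ = ((1-u)^d * (1+s+s^2/2+s^3/6)) * ((s+u)*(1-2*u-s*u)) := by ring
      _ ≤ 1 * ((s+u)*(1-2*u-s*u)) := by gcongr
      _ = _ := one_mul _
  obtain ⟨q, hqq⟩ : ∃ q, q = (1-u)^d := ⟨_, rfl⟩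
  rw [← hqq] at h6 hq ⊢
  obtain ⟨N, hN⟩ : ∃ N, N = (d:ℝ)+1 := ⟨_, rfl⟩
  have hsu : s + u = N*u := by rw [hs, hN]; ring
  have hss : s = N*u - u := by linarith
  have hN0 : 0 < N := by rw [hN]; positivity
  rw [← hN]
  rw [hsu, hss] at h6
  have h7 : q * (N*(1-u^2) + (1-u)^2) ≤ N*(1-2*u-(N*u-u)*u) := by
    have : u * (q * (N*(1-u^2) + (1-u)^2)) ≤ u * (N*(1-2*u-(N*u-u)*u)) := by linarith
    exact le_of_mul_le_mul_left this hu0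
  have e : (1 + (u + (1-u)*(1/N))) * ((1-u) * (1 - q*(1/N))) - 1 = (N*(1-2*u-(N*u-u)*u) - q * (N*(1-u^2) + (1-u)^2)) / N^2 := by
    field_simp; ring
  have : 0 ≤ (N*(1-2*u-(N*u-u)*u) - q * (N*(1-u^2) + (1-u)^2)) / N^2 := by
    apply div_nonneg <;> [linarith; positivity]
  linarith

/-- integrand at (2,0) -/
noncomputable def FF {V : Type*} [Fintype V] {α : Type*} [LT α] (G : SimpleGraph V) (A : Set V)
    (f : V → α) : ℝ :=
  ∏ v, (if v ∈ A then (if ∀ j, G.Adj v j → f j < f v then 2 else 1)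
    else (if ∀ j, G.Adj v j → f j < f v then 0 else 1))

theorem FF_nonneg {V : Type*} [Fintype V] {α : Type*} [LT α] (G : SimpleGraph V) (A : Set V)
    (f : V → α) : 0 ≤ FF G A f := by
  unfold FF
  apply Finset.prod_nonneg
  intro v _
  split_ifs <;> norm_num

theorem FF_le {V : Type*} [Fintype V] {α : Type*} [LT α] (G : SimpleGraph V) (A : Set V)
    (f : V → α) : FF G A f ≤ 2 ^ Fintype.card V := by
  unfold FF
  rw [← Finset.card_univ, ← Finset.prod_const]
  apply Finset.prod_le_prod
  · intro v _
    split_ifs <;> norm_num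
  · intro v _
    split_ifs <;> norm_num

theorem pow_card_eq {V : Type*} [Fintype V] (P : V → Prop) (x : ℝ) :
    x ^ Nat.card {v : V // P v} = ∏ v, (if P v then x else 1) := by
  rw [Nat.card_eq_fintype_card, Fintype.card_subtype, Finset.prod_ite]
  simp

theorem permTutte_two_zero {V : Type*} [Fintype V] [DecidableEq V]
    (G : SimpleGraph V) (A : Set V) :
    permTutte G A 2 0 = ((Fintype.card V).factorial : ℝ)⁻¹ *
      ∑ π : V ≃ Fin (Fintype.card V), FF G A π := by
  unfold permTutte FF
  congr 1
  apply Finset.sum_congr rfl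
  intro π _
  rw [pow_card_eq, pow_card_eq, ← Finset.prod_mul_distrib]
  apply Finset.prod_congr rfl
  intro v _
  by_cases h : v ∈ A <;> simp [h]

theorem permTutte_swap {V : Type*} [Fintype V] [DecidableEq V]
    (G : SimpleGraph V) (A : Set V) (x y : ℝ) :
    permTutte G A x y = permTutte G Aᶜ y x := by
  unfold permTutte
  congr 1
  apply Finset.sum_congr rfl
  intro π _
  rw [mul_comm]
  simp only [Set.mem_compl_iff, not_not]

theorem permTutte_one {V : Type*} [Fintype V] [DecidableEq V]
    (G : SimpleGraph V) (A : Set V) : permTutte G A 1 1 = 1 := by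
  unfold permTutte
  simp only [one_pow, mul_one, Finset.sum_const, Finset.card_univ, nsmul_eq_mul]
  rw [Fintype.card_equiv (Fintype.equivFin V)]
  apply inv_mul_cancel₀
  positivity

theorem inj_sum_le {V : Type*} [Fintype V] [DecidableEq V]
    (G : SimpleGraph V) (A : Set V) (M : ℕ) :
    ∑ f : V → Fin M with Function.Injective f, FF G A f ≤
      (M.choose (Fintype.card V) : ℝ) * ∑ π : V ≃ Fin (Fintype.card V), FF G A π := by
  have hmap : ∀ f ∈ (Finset.univ.filter fun f : V → Fin M => Function.Injective f),
      Finset.univ.image f ∈ Finset.powersetCard (Fintype.card V) (Finset.univ : Finset (Fin M)) := by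
    intro f hf
    rw [Finset.mem_powersetCard]
    refine ⟨Finset.subset_univ _, ?_⟩
    rw [Finset.card_image_of_injective _ (Finset.mem_filter.1 hf).2, Finset.card_univ]
  rw [← Finset.sum_fiberwise_of_maps_to hmap]
  have hc : (M.choose (Fintype.card V) : ℝ) =
      ((Finset.powersetCard (Fintype.card V) (Finset.univ : Finset (Fin M))).card : ℝ) := by
    simp
  rw [hc, ← nsmul_eq_mul]
  apply Finset.sum_le_card_nsmul
  intro s hs
  have hs' := (Finset.mem_powersetCard.1 hs).2
  let e := s.orderIsoOfFin hs'
  let Φ : (V ≃ Fin (Fintype.card V)) → (V → Fin M) := fun π v => (e (π v) : Fin M)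
  have hΦ : Function.Injective Φ := by
    intro π σ h
    ext v
    have := congrFun h v
    have := e.injective (Subtype.ext this)
    rw [this]
  have hF : ∀ π, FF G A (Φ π) = FF G A π := by
    intro π
    unfold FF
    have : ∀ v j, (Φ π j < Φ π v ↔ π j < π v) := by
      intro v j
      exact e.lt_iff_lt (x := π j) (y := π v)
    simp only [this]
    congr!
  calc _ ≤ ∑ f ∈ Finset.univ.image Φ, FF G A f := by
        apply Finset.sum_le_sum_of_subset_of_nonneg
        · intro f hf
          simp only [Finset.mem_filter, Finset.mem_univ, true_and] at hf
          obtain ⟨hinj, him⟩ := hf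
          have hm : ∀ v, f v ∈ s := fun v => by rw [← him]; simp
          let g : V → Fin (Fintype.card V) := fun v => e.symm ⟨f v, hm v⟩
          have hg : Function.Injective g := by
            intro a b hab
            have := e.symm.injective hab
            exact hinj (Subtype.ext_iff.1 this)
          have hgb : Function.Bijective g :=
            (Fintype.bijective_iff_injective_and_card g).2 ⟨hg, by simp⟩
          rw [Finset.mem_image]
          refine ⟨Equiv.ofBijective g hgb, Finset.mem_univ _, ?_⟩
          funext v
          simp [Φ, g]
        · intro f _ _
          exact FF_nonneg _ _ _
    _ = ∑ π : V ≃ Fin (Fintype.card V), FF G A π := by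
        rw [Finset.sum_image (fun a _ b _ h => hΦ h)]
        exact Finset.sum_congr rfl fun π _ => hF π

theorem permTutte_ge {V : Type*} [Fintype V] [DecidableEq V]
    (G : SimpleGraph V) (A : Set V) (M : ℕ) (hM : 0 < M) :
    (∑ f : V → Fin M, FF G A f) / (M:ℝ) ^ Fintype.card V
      - 2 ^ Fintype.card V * (1 - (M.descFactorial (Fintype.card V) : ℝ) / (M:ℝ) ^ Fintype.card V)
      ≤ permTutte G A 2 0 := by
  set m := Fintype.card V with hm
  have hMm : (0:ℝ) < (M:ℝ)^m := by positivity
  have h1 := inj_sum_le G A M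
  have hS : 0 ≤ ∑ π : V ≃ Fin (Fintype.card V), FF G A π :=
    Finset.sum_nonneg fun π _ => FF_nonneg _ _ _
  have h2 : (M.choose m : ℝ) * ∑ π : V ≃ Fin (Fintype.card V), FF G A π ≤
      (M:ℝ)^m * permTutte G A 2 0 := by
    rw [permTutte_two_zero]
    calc _ ≤ (M:ℝ)^m / (m.factorial : ℝ) * ∑ π : V ≃ Fin (Fintype.card V), FF G A π := by
          gcongr
          exact Nat.choose_le_pow_div _ _
      _ = _ := by rw [← hm]; ring
  have h3 : ∑ f : V → Fin M with ¬ Function.Injective f, FF G A f ≤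
      2^m * ((M:ℝ)^m - M.descFactorial m) := by
    have hc : ((Finset.univ.filter fun f : V → Fin M => Function.Injective f).card : ℝ) =
        M.descFactorial m := by
      have : Fintype.card {f : V → Fin M // Function.Injective f} = M.descFactorial m := by
        rw [Fintype.card_congr (Equiv.subtypeInjectiveEquivEmbedding V (Fin M)),
          Fintype.card_embedding_eq]
        simp [hm]
      rw [← this, Fintype.card_subtype]
    have hc2 := Finset.card_filter_add_card_filter_not (s := (Finset.univ : Finset (V → Fin M)))
      (fun f => Function.Injective f)
    have hc3 : ((Finset.univ.filter fun f : V → Fin M => Function.Injective f).card : ℝ) +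
      ((Finset.univ.filter fun f : V → Fin M => ¬ Function.Injective f).card : ℝ) = (M:ℝ)^m := by
      rw [← Nat.cast_add, hc2]
      simp [hm]
    calc _ ≤ ∑ f : V → Fin M with ¬ Function.Injective f, (2:ℝ)^m :=
          Finset.sum_le_sum fun f _ => FF_le _ _ _
      _ = _ := by
        rw [Finset.sum_const, nsmul_eq_mul, ← hc, ← hc3]; ring
  have h4 := Finset.sum_filter_add_sum_filter_not (Finset.univ : Finset (V → Fin M))
    (fun f => Function.Injective f) (fun f => FF G A f)
  have h5 : ∑ f : V → Fin M, FF G A f ≤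
      (M:ℝ)^m * permTutte G A 2 0 + 2^m * ((M:ℝ)^m - M.descFactorial m) := by
    rw [← h4]; linarith
  have h6 : (∑ f : V → Fin M, FF G A f) / (M:ℝ) ^ m ≤
      permTutte G A 2 0 + 2^m * (1 - (M.descFactorial m : ℝ) / (M:ℝ)^m) := by
    rw [div_le_iff₀ hMm]
    have : (permTutte G A 2 0 + 2^m * (1 - (M.descFactorial m : ℝ) / (M:ℝ)^m)) * (M:ℝ)^m =
       (M:ℝ)^m * permTutte G A 2 0 + 2^m * ((M:ℝ)^m - M.descFactorial m) := by
      field_simp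
    rw [this]; exact h5
  linarith

theorem harris {α ι : Type*} [DistribLattice α] [Fintype α] (μ : α → ℝ) (φ : ι → α → ℝ)
    (hμ : 0 ≤ μ) (hφ : ∀ v, 0 ≤ φ v) (hmono : ∀ v, Monotone (φ v))
    (hlog : ∀ a b, μ a * μ b ≤ μ (a ⊓ b) * μ (a ⊔ b)) (hpos : 0 < ∑ a, μ a) (s : Finset ι) :
    (∑ a, μ a) * ∏ v ∈ s, ((∑ a, μ a * φ v a) / ∑ a, μ a) ≤ ∑ a, μ a * ∏ v ∈ s, φ v a := by
  induction s using Finset.induction_on with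
  | empty => simp
  | insert v s hv ih =>
    have h := fkg (φ v) (fun a => ∏ w ∈ s, φ w a) μ hμ (hφ v)
      (fun a => Finset.prod_nonneg fun w _ => hφ w a) (hmono v)
      (fun a b hab => Finset.prod_le_prod (fun w _ => hφ w a) (fun w _ => hmono w hab)) hlog
    have hnn : 0 ≤ ∑ a, μ a * φ v a := Finset.sum_nonneg fun a _ => mul_nonneg (hμ a) (hφ v a)
    simp only [Finset.prod_insert hv]
    have h2 := mul_le_mul_of_nonneg_left ih hnn
    have h3 : (∑ a, μ a) * ((∑ a, μ a) * (((∑ a, μ a * φ v a) / ∑ a, μ a) *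
        ∏ w ∈ s, ((∑ a, μ a * φ w a) / ∑ a, μ a))) ≤
        (∑ a, μ a) * ∑ a, μ a * (φ v a * ∏ w ∈ s, φ w a) := by
      refine le_trans (le_of_eq ?_) (h2.trans h)
      field_simp
    exact le_of_mul_le_mul_left h3 hpos

theorem card_lt_fin (M n : ℕ) (h : n ≤ M) :
    (Finset.univ.filter fun x : Fin M => (x:ℕ) < n).card = n := by
  rw [Fin.card_filter_val_lt]; simp [h]

/-- box -/
noncomputable def boxS {V : Type*} [Fintype V] [DecidableEq V] (M : ℕ) (n : V → ℕ) : Finset (V → Fin M) :=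
  Fintype.piFinset (fun v => Finset.univ.filter fun x : Fin M => (x:ℕ) < n v)

theorem boxS_card {V : Type*} [Fintype V] [DecidableEq V] (M : ℕ) (n : V → ℕ) (hn : ∀ v, n v ≤ M) :
    (boxS M n).card = ∏ v, n v := by
  unfold boxS
  rw [Fintype.card_piFinset]
  exact Finset.prod_congr rfl fun v _ => card_lt_fin M _ (hn v)

theorem marginal {V : Type*} [Fintype V] [DecidableEq V] (G : SimpleGraph V) [DecidableRel G.Adj]
    (M b : ℕ) (n : V → ℕ) (hn : ∀ v, n v ≤ M) (hpos : ∀ v, 0 < n v) (v : V)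
    (hb : ∀ j, G.Adj v j → n j = b) :
    (((boxS M n).filter fun f => ∀ j, G.Adj v j → f j < f v).card : ℝ) =
      ((boxS M n).card : ℝ) *
        ((∑ x ∈ Finset.range (n v), (((min x b : ℕ) : ℝ) / b) ^ G.degree v) / n v) := by
  have hmap : ∀ f ∈ (boxS M n).filter (fun f => ∀ j, G.Adj v j → f j < f v),
      (f v : ℕ) ∈ Finset.range (n v) := by
    intro f hf
    have := (Finset.mem_filter.1 hf).1
    unfold boxS at this
    rw [Fintype.mem_piFinset] at this
    have := this v
    simpa using this
  rw [Finset.card_eq_sum_card_fiberwise hmap]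
  push_cast
  rw [Finset.sum_div, Finset.mul_sum]
  apply Finset.sum_congr rfl
  intro x hx
  have hx' : x < n v := Finset.mem_range.1 hx
  have hfib : ((boxS M n).filter (fun f => ∀ j, G.Adj v j → f j < f v)).filter
      (fun f => (f v : ℕ) = x) =
      Fintype.piFinset (fun w => Finset.univ.filter fun y : Fin M =>
        if w = v then (y:ℕ) = x else if G.Adj v w then (y:ℕ) < min x (n w) else (y:ℕ) < n w) := by
    ext f
    unfold boxS
    simp only [Finset.mem_filter, Fintype.mem_piFinset, Finset.mem_univ, true_and]
    constructor
    · rintro ⟨⟨h1, h2⟩, h3⟩ w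
      split_ifs with c1 c2
      · rw [c1, h3]
      · have := h2 w c2
        rw [Fin.lt_def, h3] at this
        exact lt_min this (h1 w)
      · exact h1 w
    · intro h
      have hv : (f v : ℕ) = x := by simpa using h v
      refine ⟨⟨?_, ?_⟩, hv⟩
      · intro w
        have := h w
        split_ifs at this with c1 c2
        · rw [c1] at *; omega
        · exact lt_of_lt_of_le this (min_le_right _ _)
        · exact this
      · intro w hw
        have := h w
        rw [if_neg hw.ne', if_pos hw] at this
        rw [Fin.lt_def, hv]
        exact lt_of_lt_of_le this (min_le_left _ _)
  rw [hfib, Fintype.card_piFinset, boxS_card M n hn]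
  push_cast
  have hc : ∀ w, ((Finset.univ.filter fun y : Fin M =>
        if w = v then (y:ℕ) = x else if G.Adj v w then (y:ℕ) < min x (n w) else (y:ℕ) < n w).card : ℝ)
      = n w * ((if w = v then (1:ℝ) / n v else 1) *
        (if G.Adj v w then (((min x b : ℕ) : ℝ) / b) else 1)) := by
    intro w
    have hw0 : (n w : ℝ) ≠ 0 := by exact_mod_cast (hpos w).ne'
    by_cases c1 : w = v
    · subst c1
      simp only [if_true, SimpleGraph.irrefl, if_false, mul_one]
      have : (Finset.univ.filter fun y : Fin M => (y:ℕ) = x) = {⟨x, lt_of_lt_of_le hx' (hn w)⟩} := by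
        ext y; simp [Fin.ext_iff]
      rw [this]
      field_simp
      simp
    · by_cases c2 : G.Adj v w
      · simp only [c1, c2, if_true, if_false, one_mul]
        rw [card_lt_fin M _ ((min_le_right _ _).trans (hn w)), hb w c2]
        rw [hb w c2] at hw0
        field_simp
      · simp only [c1, c2, if_false, mul_one]
        rw [card_lt_fin M _ (hn w)]
  rw [Finset.prod_congr rfl fun w _ => hc w, Finset.prod_mul_distrib, Finset.prod_mul_distrib]
  congr 1
  rw [Finset.prod_ite_eq' Finset.univ v, Finset.prod_ite, Finset.prod_const_one,
    Finset.prod_const, mul_one]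
  have : (Finset.univ.filter fun w => G.Adj v w).card = G.degree v := by
    rw [← SimpleGraph.card_neighborFinset_eq_degree, SimpleGraph.neighborFinset_eq_filter]
  rw [this]
  simp
  ring

/-- single factor -/
noncomputable def term {V : Type*} {α : Type*} [LT α] (G : SimpleGraph V) (A : Set V) (v : V)
    (f : V → α) : ℝ :=
  (if v ∈ A then (if ∀ j, G.Adj v j → f j < f v then 2 else 1)
    else (if ∀ j, G.Adj v j → f j < f v then 0 else 1))

theorem term_nonneg {V : Type*} {α : Type*} [LT α] (G : SimpleGraph V) (A : Set V) (v : V)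
    (f : V → α) : 0 ≤ term G A v f := by
  unfold term; split_ifs <;> norm_num

/-- twist -/
noncomputable def tw {V : Type*} (A : Set V) {M : ℕ} (f : V → Fin M) : V → Fin M :=
  fun v => if v ∈ A then f v else Fin.rev (f v)

theorem tw_tw {V : Type*} (A : Set V) {M : ℕ} (f : V → Fin M) : tw A (tw A f) = f := by
  funext v; unfold tw; split_ifs <;> simp

theorem sum_tw {V : Type*} [Fintype V] [DecidableEq V] (A : Set V) {M : ℕ} (F : (V → Fin M) → ℝ) :
    ∑ f, F (tw A f) = ∑ f, F f :=
  Equiv.sum_comp (Function.Involutive.toPerm (tw A) (tw_tw A)) F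

theorem term_mono {V : Type*} (G : SimpleGraph V) (A : Set V) (hbip : IsBipartition G A)
    {M : ℕ} (v : V) : Monotone (fun g : V → Fin M => term G A v (tw A g)) := by
  intro a b hab
  simp only [term]
  by_cases hv : v ∈ A
  · simp only [if_pos hv]
    by_cases h : ∀ j, G.Adj v j → tw A a j < tw A a v
    · have h' : ∀ j, G.Adj v j → tw A b j < tw A b v := by
        intro j hj
        have h1 := h j hj
        have hjA : j ∉ A := (hbip v j hj).1 hv
        simp only [tw, if_pos hv, if_neg hjA] at h1 ⊢
        exact lt_of_le_of_lt (Fin.rev_le_rev.2 (hab j)) (lt_of_lt_of_le h1 (hab v))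
      rw [if_pos h, if_pos h']
    · rw [if_neg h]; split_ifs <;> norm_num
  · simp only [if_neg hv]
    by_cases h : ∀ j, G.Adj v j → tw A b j < tw A b v
    · have h' : ∀ j, G.Adj v j → tw A a j < tw A a v := by
        intro j hj
        have h1 := h j hj
        have hjA : j ∈ A := by
          by_contra hc
          exact hv ((hbip v j hj).2 hc)
        simp only [tw, if_neg hv, if_pos hjA] at h1 ⊢
        exact lt_of_le_of_lt (hab j) (lt_of_lt_of_le h1 (Fin.rev_le_rev.2 (hab v)))
      rw [if_pos h, if_pos h']
    · rw [if_neg h]; split_ifs <;> norm_num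

theorem box_lower {V : Type*} [Fintype V] [DecidableEq V] (G : SimpleGraph V) (A : Set V)
    (hbip : IsBipartition G A) (M : ℕ) (n : V → ℕ) (hn : ∀ v, n v ≤ M) (hpos : ∀ v, 0 < n v) :
    ((boxS M n).card : ℝ) * ∏ v, ((∑ f ∈ boxS M n, term G A v f) / ((boxS M n).card : ℝ)) ≤
      ∑ f : V → Fin M, FF G A f := by
  let μ : (V → Fin M) → ℝ := fun g => if tw A g ∈ boxS M n then 1 else 0
  have hμ : 0 ≤ μ := by intro g; simp only [μ]; split_ifs <;> simp
  have hmem : ∀ g, tw A g ∈ boxS M n ↔ ∀ w, (tw A g w : ℕ) < n w := by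
    intro g; unfold boxS; simp
  have hgen : ∀ F : (V → Fin M) → ℝ, ∑ g, μ g * F (tw A g) = ∑ f ∈ boxS M n, F f := by
    intro F
    have := sum_tw A (fun f => (if f ∈ boxS M n then (1:ℝ) else 0) * F f)
    simp only [μ]
    rw [this]
    simp
  have hsum : ∑ g, μ g = ((boxS M n).card : ℝ) := by
    have := hgen (fun _ => 1)
    simpa using this
  have hlog : ∀ a b, μ a * μ b ≤ μ (a ⊓ b) * μ (a ⊔ b) := by
    intro a b
    by_cases ha : tw A a ∈ boxS M n
    · by_cases hb : tw A b ∈ boxS M n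
      · have h1 : tw A (a ⊓ b) ∈ boxS M n := by
          rw [hmem] at *
          intro w
          have hor : (a ⊓ b) w = a w ∨ (a ⊓ b) w = b w := min_choice (a w) (b w)
          have hA := ha w
          have hB := hb w
          simp only [tw] at *
          rcases hor with h | h <;> rw [h] <;> assumption
        have h2 : tw A (a ⊔ b) ∈ boxS M n := by
          rw [hmem] at *
          intro w
          have hor : (a ⊔ b) w = a w ∨ (a ⊔ b) w = b w := max_choice (a w) (b w)
          have hA := ha w
          have hB := hb w
          simp only [tw] at *
          rcases hor with h | h <;> rw [h] <;> assumption
        simp [μ, ha, hb, h1, h2]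
      · have : μ b = 0 := by simp [μ, hb]
        rw [this, mul_zero]; exact mul_nonneg (hμ _) (hμ _)
    · have : μ a = 0 := by simp [μ, ha]
      rw [this, zero_mul]; exact mul_nonneg (hμ _) (hμ _)
  have hcpos : (0:ℝ) < ((boxS M n).card : ℝ) := by
    rw [boxS_card M n hn]
    exact_mod_cast Finset.prod_pos fun v _ => hpos v
  have hh := harris μ (fun v g => term G A v (tw A g)) hμ (fun v g => term_nonneg _ _ _ _)
    (fun v => term_mono G A hbip v) hlog (by rw [hsum]; exact hcpos) Finset.univ
  simp only [hgen, hsum] at hh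
  have h3 := hgen (fun f => ∏ v, term G A v f)
  rw [h3] at hh
  refine hh.trans ?_
  have hFF : ∀ f : V → Fin M, ∏ v, term G A v f = FF G A f := by
    intro f
    unfold FF term
    congr!
  simp only [hFF]
  apply Finset.sum_le_sum_of_subset_of_nonneg (Finset.subset_univ _)
  intro f _ _
  exact FF_nonneg G A f

theorem sum_term {V : Type*} [Fintype V] [DecidableEq V] (G : SimpleGraph V) [DecidableRel G.Adj]
    (A : Set V)
    (M b : ℕ) (n : V → ℕ) (hn : ∀ v, n v ≤ M) (hpos : ∀ v, 0 < n v) (v : V)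
    (hb : ∀ j, G.Adj v j → n j = b) :
    (∑ f ∈ boxS M n, term G A v f) / ((boxS M n).card : ℝ) =
      if v ∈ A then
        1 + ((∑ x ∈ Finset.range (n v), (((min x b : ℕ) : ℝ) / b) ^ G.degree v) / n v)
      else 1 - ((∑ x ∈ Finset.range (n v), (((min x b : ℕ) : ℝ) / b) ^ G.degree v) / n v) := by
  have hcpos : (0:ℝ) < ((boxS M n).card : ℝ) := by
    rw [boxS_card M n hn]
    exact_mod_cast Finset.prod_pos fun v _ => hpos v
  have hm := marginal G M b n hn hpos v hb
  set X := ((∑ x ∈ Finset.range (n v), (((min x b : ℕ) : ℝ) / b) ^ G.degree v) / n v)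
  have hi : ∑ f ∈ boxS M n, (if ∀ j, G.Adj v j → f j < f v then (1:ℝ) else 0) =
      ((boxS M n).card : ℝ) * X := by
    rw [← hm, Finset.sum_boole]
  split_ifs with hv
  · have : ∀ f : V → Fin M, term G A v f = 1 + (if ∀ j, G.Adj v j → f j < f v then (1:ℝ) else 0) := by
      intro f; unfold term; rw [if_pos hv]; split_ifs <;> norm_num
    simp only [this]
    rw [Finset.sum_add_distrib, hi]
    simp only [Finset.sum_const, nsmul_eq_mul, mul_one]
    field_simp
  · have : ∀ f : V → Fin M, term G A v f = 1 - (if ∀ j, G.Adj v j → f j < f v then (1:ℝ) else 0) := by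
      intro f; unfold term; rw [if_neg hv]; split_ifs <;> norm_num
    simp only [this]
    rw [Finset.sum_sub_distrib, hi]
    simp only [Finset.sum_const, nsmul_eq_mul, mul_one]
    field_simp

/-- Riemann sums -/
noncomputable def RR (d n : ℕ) : ℝ := (∑ x ∈ Finset.range n, ((x:ℝ) / n) ^ d) / n

theorem sum_pow_upper (d n : ℕ) :
    ((d:ℝ)+1) * ∑ x ∈ Finset.range n, (x:ℝ) ^ d ≤ (n:ℝ)^(d+1) := by
  induction n with
  | zero => simp
  | succ n ih =>
    rw [Finset.sum_range_succ, mul_add]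
    have h := one_add_mul_self_le_pow d (n:ℝ) n.cast_nonneg
    push_cast
    linarith
where
  one_add_mul_self_le_pow (d : ℕ) (x : ℝ) (hx : 0 ≤ x) :
      x^(d+1) + ((d:ℝ)+1) * x^d ≤ (x+1)^(d+1) := by
    induction d with
    | zero => simp
    | succ d ih =>
      have h2 := mul_le_mul_of_nonneg_right ih (by linarith : 0 ≤ x+1)
      have h3 : 0 ≤ ((d:ℝ)+1) * x^d := by positivity
      rw [pow_succ (x+1)]
      refine le_trans ?_ h2
      push_cast
      have : (x ^ (d + 1) + ((d:ℝ) + 1) * x ^ d) * (x + 1) = x^(d+1+1) + ((d:ℝ)+1+1)*x^(d+1) + ((d:ℝ)+1) * x^d := by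
        ring
      linarith

theorem pow_succ_upper (d : ℕ) (x : ℝ) (hx : 0 ≤ x) :
    (x+1)^(d+1) ≤ x^(d+1) + ((d:ℝ)+1) * (x+1)^d := by
  induction d with
  | zero => simp
  | succ d ih =>
    have h2 := mul_le_mul_of_nonneg_right ih (by linarith : 0 ≤ x+1)
    have h3 : x^(d+1) ≤ (x+1)^(d+1) := by gcongr; linarith
    rw [← pow_succ] at h2
    refine h2.trans ?_
    push_cast
    have : (x ^ (d + 1) + ((d:ℝ) + 1) * (x+1) ^ d) * (x + 1) = x^(d+1+1) + x^(d+1) + ((d:ℝ)+1)*(x+1)^(d+1) := by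
      ring
    linarith

theorem sum_pow_lower (d n : ℕ) :
    (n:ℝ)^(d+1) ≤ ((d:ℝ)+1) * (∑ x ∈ Finset.range n, (x:ℝ) ^ d + (n:ℝ)^d) := by
  have key : (n:ℝ)^(d+1) ≤ ((d:ℝ)+1) * (∑ x ∈ Finset.range n, ((x:ℝ)+1) ^ d) := by
    induction n with
    | zero => simp
    | succ n ih =>
      rw [Finset.sum_range_succ, mul_add]
      have := pow_succ_upper d (n:ℝ) n.cast_nonneg
      push_cast
      linarith
  refine key.trans ?_
  gcongr
  have h1 := Finset.sum_range_succ (fun x : ℕ => (x:ℝ)^d) n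
  have h2 := Finset.sum_range_succ' (fun x : ℕ => (x:ℝ)^d) n
  push_cast at h2
  have : (0:ℝ) ≤ (0:ℝ)^d := by positivity
  linarith

theorem RR_tendsto (d : ℕ) : Filter.Tendsto (RR d) Filter.atTop (nhds (1/((d:ℝ)+1))) := by
  have hinv : Filter.Tendsto (fun n : ℕ => 1/((d:ℝ)+1) - 1/(n:ℝ)) Filter.atTop
      (nhds (1/((d:ℝ)+1) - 0)) :=
    tendsto_const_nhds.sub tendsto_one_div_atTop_nhds_zero_nat
  rw [sub_zero] at hinv
  have heq : ∀ n : ℕ, 0 < n → RR d n = (∑ x ∈ Finset.range n, (x:ℝ) ^ d) / (n:ℝ)^(d+1) := by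
    intro n hn
    unfold RR
    simp only [div_pow]
    rw [← Finset.sum_div, div_div, pow_succ]
  refine tendsto_of_tendsto_of_tendsto_of_le_of_le' hinv tendsto_const_nhds ?_ ?_
  · filter_upwards [Filter.eventually_gt_atTop 0] with n hn
    have hn' : (0:ℝ) < n := by exact_mod_cast hn
    rw [heq n hn]
    have h := sum_pow_lower d n
    rw [le_div_iff₀ (by positivity)]
    have e : (1/((d:ℝ)+1) - 1/(n:ℝ)) * (n:ℝ)^(d+1) = (n:ℝ)^(d+1)/((d:ℝ)+1) - (n:ℝ)^d := by
      field_simp; ring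
    rw [e, sub_le_iff_le_add, div_le_iff₀ (by positivity)]
    linarith
  · filter_upwards [Filter.eventually_gt_atTop 0] with n hn
    have hn' : (0:ℝ) < n := by exact_mod_cast hn
    rw [heq n hn]
    have h := sum_pow_upper d n
    rw [div_le_div_iff₀ (by positivity) (by positivity)]
    linarith

theorem ave1 (d M M' : ℕ) (h0 : 0 < M') (h : M' ≤ M) :
    (∑ x ∈ Finset.range M, (((min x M' : ℕ) : ℝ) / M') ^ d) / M =
      (1 - (M':ℝ)/M) + (M':ℝ)/M * RR d M' := by
  have hM' : (0:ℝ) < M' := by exact_mod_cast h0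
  have hM : (0:ℝ) < M := by exact_mod_cast h0.trans_le h
  rw [Finset.range_eq_Ico, ← Finset.sum_Ico_consecutive _ (Nat.zero_le M') h]
  have e1 : ∑ x ∈ Finset.Ico 0 M', (((min x M' : ℕ) : ℝ) / M') ^ d = M' * RR d M' := by
    unfold RR
    rw [mul_div_cancel₀ _ hM'.ne', Finset.range_eq_Ico]
    apply Finset.sum_congr rfl
    intro x hx
    rw [min_eq_left (Finset.mem_Ico.1 hx).2.le]
  have e2 : ∑ x ∈ Finset.Ico M' M, (((min x M' : ℕ) : ℝ) / M') ^ d = (M:ℝ) - M' := by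
    rw [Finset.sum_congr rfl (g := fun _ => (1:ℝ))]
    · simp [Nat.cast_sub h]
    · intro x hx
      rw [min_eq_right (Finset.mem_Ico.1 hx).1, div_self hM'.ne', one_pow]
  rw [e1, e2]
  field_simp
  ring

theorem ave2 (d M M' : ℕ) (h0 : 0 < M') (h : M' ≤ M) :
    (∑ x ∈ Finset.range M', (((min x M : ℕ) : ℝ) / M) ^ d) / M' =
      ((M':ℝ)/M)^d * RR d M' := by
  have hM' : (0:ℝ) < M' := by exact_mod_cast h0
  have hM : (0:ℝ) < M := by exact_mod_cast h0.trans_le h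
  unfold RR
  rw [← mul_div_assoc, Finset.mul_sum]
  congr 1
  apply Finset.sum_congr rfl
  intro x hx
  rw [min_eq_left ((Finset.mem_range.1 hx).le.trans h), ← mul_pow]
  congr 1
  field_simp

theorem discrete_lower {V : Type*} [Fintype V] [DecidableEq V] (G : SimpleGraph V)
    [DecidableRel G.Adj] (A : Set V) (hbip : IsBipartition G A) (M M' : ℕ) (h0 : 0 < M')
    (h : M' ≤ M) :
    ∏ v, (if v ∈ A then 1 + ((1 - (M':ℝ)/M) + (M':ℝ)/M * RR (G.degree v) M')
        else (M':ℝ)/M * (1 - ((M':ℝ)/M)^(G.degree v) * RR (G.degree v) M'))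
      - 2 ^ Fintype.card V * (1 - (M.descFactorial (Fintype.card V) : ℝ) / (M:ℝ) ^ Fintype.card V)
      ≤ permTutte G A 2 0 := by
  have hM : (0:ℝ) < M := by exact_mod_cast h0.trans_le h
  refine le_trans ?_ (permTutte_ge G A M (h0.trans_le h))
  gcongr
  let n : V → ℕ := fun v => if v ∈ A then M else M'
  have hn : ∀ v, n v ≤ M := by intro v; simp only [n]; split_ifs <;> omega
  have hpos : ∀ v, 0 < n v := by intro v; simp only [n]; split_ifs <;> omega
  have hb := box_lower G A hbip M n hn hpos
  rw [le_div_iff₀ (by positivity)]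
  refine le_trans (le_of_eq ?_) hb
  have hcc : ((boxS M n).card : ℝ) = ∏ v, (n v : ℝ) := by rw [boxS_card M n hn]; push_cast; rfl
  rw [← Finset.card_univ, ← Finset.prod_const]
  have hcong : ∀ X : ℝ, ((boxS M n).card : ℝ) * X = (∏ v, (n v : ℝ)) * X := fun X => by rw [hcc]
  rw [hcong, ← Finset.prod_mul_distrib, ← Finset.prod_mul_distrib]
  apply Finset.prod_congr rfl
  intro v _
  by_cases hv : v ∈ A
  · have hnb : ∀ j, G.Adj v j → n j = M' := by
      intro j hj
      have : j ∉ A := (hbip v j hj).1 hv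
      simp [n, this]
    rw [sum_term G A M M' n hn hpos v hnb]
    simp only [n, if_pos hv]
    rw [ave1 _ _ _ h0 h]
    ring
  · have hnb : ∀ j, G.Adj v j → n j = M := by
      intro j hj
      have : j ∈ A := by
        by_contra hc
        exact hv ((hbip v j hj).2 hc)
      simp [n, this]
    rw [sum_term G A M M n hn hpos v hnb]
    simp only [n, if_neg hv]
    rw [ave2 _ _ _ h0 h]
    field_simp

theorem desc_tendsto (m : ℕ) : Filter.Tendsto
    (fun M : ℕ => (M.descFactorial m : ℝ) / (M:ℝ)^m) Filter.atTop (nhds 1) := by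
  have h1 : Filter.Tendsto (fun M : ℕ => (1 - (m:ℝ) * (1/(M:ℝ)))^m) Filter.atTop
      (nhds ((1 - (m:ℝ)*0)^m)) :=
    (tendsto_const_nhds.sub (tendsto_one_div_atTop_nhds_zero_nat.const_mul _)).pow m
  simp only [mul_zero, sub_zero, one_pow] at h1
  refine tendsto_of_tendsto_of_tendsto_of_le_of_le' h1 tendsto_const_nhds ?_ ?_
  · filter_upwards [Filter.eventually_gt_atTop m] with M hM
    have hM0 : (0:ℝ) < M := by exact_mod_cast (Nat.zero_le m).trans_lt hM
    rw [le_div_iff₀ (by positivity), ← mul_pow]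
    have h2 : ((M + 1 - m : ℕ):ℝ)^m ≤ (M.descFactorial m : ℝ) := by
      exact_mod_cast Nat.pow_sub_le_descFactorial M m
    refine le_trans ?_ h2
    have hm : (m:ℝ) < M := by exact_mod_cast hM
    have e : (1 - (m:ℝ) * (1/(M:ℝ))) * M = M - m := by field_simp
    rw [e]
    apply pow_le_pow_left₀ (by linarith)
    rw [Nat.cast_sub (by omega)]
    push_cast; linarith
  · filter_upwards [Filter.eventually_gt_atTop m] with M hM
    have hM0 : (0:ℝ) < M := by exact_mod_cast (Nat.zero_le m).trans_lt hM
    rw [div_le_one (by positivity)]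
    exact_mod_cast Nat.descFactorial_le_pow M m

theorem limit_lower {V : Type*} [Fintype V] [DecidableEq V] (G : SimpleGraph V)
    [DecidableRel G.Adj] (A : Set V) (hbip : IsBipartition G A) (u : ℝ) (hu0 : 0 < u) (hu1 : u < 1) :
    ∏ v, (if v ∈ A then 1 + (u + (1-u) * (1/((G.degree v:ℝ)+1)))
        else (1-u) * (1 - (1-u)^(G.degree v) * (1/((G.degree v:ℝ)+1))))
      ≤ permTutte G A 2 0 := by
  let r : ℕ → ℕ := fun M => ⌊(1-u) * (M:ℝ)⌋₊
  have hr : Filter.Tendsto (fun M : ℕ => (r M : ℝ)/M) Filter.atTop (nhds (1-u)) :=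
    (tendsto_nat_floor_mul_div_atTop (by linarith : 0 ≤ 1-u)).comp tendsto_natCast_atTop_atTop
  have hr2 : Filter.Tendsto r Filter.atTop Filter.atTop :=
    tendsto_nat_floor_atTop.comp
      (tendsto_natCast_atTop_atTop.const_mul_atTop (by linarith : 0 < 1-u))
  have hR : ∀ d, Filter.Tendsto (fun M => RR d (r M)) Filter.atTop (nhds (1/((d:ℝ)+1))) :=
    fun d => (RR_tendsto d).comp hr2
  have hlim : Filter.Tendsto (fun M : ℕ =>
      ∏ v, (if v ∈ A then 1 + ((1 - (r M:ℝ)/M) + (r M:ℝ)/M * RR (G.degree v) (r M))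
        else (r M:ℝ)/M * (1 - ((r M:ℝ)/M)^(G.degree v) * RR (G.degree v) (r M)))
      - 2 ^ Fintype.card V * (1 - (M.descFactorial (Fintype.card V) : ℝ) / (M:ℝ) ^ Fintype.card V))
      Filter.atTop (nhds (∏ v, (if v ∈ A then 1 + (u + (1-u) * (1/((G.degree v:ℝ)+1)))
        else (1-u) * (1 - (1-u)^(G.degree v) * (1/((G.degree v:ℝ)+1)))) -
        2 ^ Fintype.card V * (1 - 1))) := by
    apply Filter.Tendsto.sub
    · apply tendsto_finsetProd
      intro v _
      by_cases hv : v ∈ A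
      · simp only [if_pos hv]
        have h1 := tendsto_const_nhds (x := (1:ℝ)).add
          ((tendsto_const_nhds (x := (1:ℝ)).sub hr).add (hr.mul (hR (G.degree v))))
        rwa [sub_sub_cancel] at h1
      · simp only [if_neg hv]
        exact hr.mul (tendsto_const_nhds.sub ((hr.pow _).mul (hR _)))
    · exact (tendsto_const_nhds.sub (desc_tendsto _)).const_mul _
  rw [sub_self, mul_zero, sub_zero] at hlim
  refine le_of_tendsto hlim ?_
  filter_upwards [hr2.eventually_gt_atTop 0] with M hM
  apply discrete_lower G A hbip M (r M) hM
  have : (1-u) * (M:ℝ) ≤ M := by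
    have : (0:ℝ) ≤ M := M.cast_nonneg
    nlinarith
  exact Nat.floor_le_of_le this

/-- If `k ≥ 4` is real and every vertex degree of the finite bipartite graph `H` lies in
`[k+1, k⁴ − 2k² − 1]`, then `T̃_H(2,0) · T̃_H(0,2) ≥ T̃_H(1,1)² = 1`. -/
theorem permTutte_merino_welsh_of_degrees
    {V : Type*} [Fintype V] [DecidableEq V] (G : SimpleGraph V) [DecidableRel G.Adj]
    (A : Set V) (hbip : IsBipartition G A)
    (k : ℝ) (hk : 4 ≤ k)
    (hdeg : ∀ v : V, k + 1 ≤ (G.degree v : ℝ) ∧ (G.degree v : ℝ) ≤ k ^ 4 - 2 * k ^ 2 - 1) :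
    permTutte G A 2 0 * permTutte G A 0 2 ≥ permTutte G A 1 1 ^ 2 ∧
      permTutte G A 1 1 ^ 2 = 1 := by
  refine ⟨?_, by rw [permTutte_one, one_pow]⟩
  rw [permTutte_one, one_pow]
  obtain ⟨u, hu⟩ : ∃ u : ℝ, u = 1/k^2 := ⟨_, rfl⟩
  have hu0 : 0 < u := by rw [hu]; positivity
  have hu1 : u < 1 := by
    rw [hu, div_lt_one (by positivity)]; nlinarith
  have hbip' : IsBipartition G Aᶜ := by
    intro a b hab
    have := hbip a b hab
    simp only [Set.mem_compl_iff, not_not]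
    tauto
  have h1 := limit_lower G A hbip u hu0 hu1
  have h2 := limit_lower G Aᶜ hbip' u hu0 hu1
  rw [permTutte_swap G A 0 2]
  have hX : ∀ v, 0 ≤ 1 + (u + (1-u) * (1/((G.degree v:ℝ)+1))) := by
    intro v
    have : 0 ≤ 1 - u := by linarith
    positivity
  have hY : ∀ v, 0 ≤ (1-u) * (1 - (1-u)^(G.degree v) * (1/((G.degree v:ℝ)+1))) := by
    intro v
    have h3 : 0 ≤ 1 - u := by linarith
    have h4 : (1-u)^(G.degree v) ≤ 1 := pow_le_one₀ h3 (by linarith)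
    have h5 : 1/((G.degree v:ℝ)+1) ≤ 1 := by
      rw [div_le_one (by positivity)]
      linarith [(G.degree v).cast_nonneg (α := ℝ)]
    have h6 : (1-u)^(G.degree v) * (1/((G.degree v:ℝ)+1)) ≤ 1 :=
      mul_le_one₀ h4 (by positivity) h5
    exact mul_nonneg h3 (by linarith)
  refine le_trans ?_ (mul_le_mul h1 h2 ?_ (le_trans ?_ h1))
  · rw [← Finset.prod_mul_distrib]
    refine le_trans (Finset.prod_const_one (M := ℝ) (s := (Finset.univ : Finset V))).ge ?_
    refine Finset.prod_le_prod (fun _ _ => zero_le_one) ?_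
    intro v _
    have h := num4 k hk (G.degree v) (hdeg v).1 (hdeg v).2 u hu
    by_cases hv : v ∈ A
    · simpa only [Set.mem_compl_iff, hv, not_true, if_true, if_false] using h
    · simp only [Set.mem_compl_iff, hv, not_false_iff, if_true, if_false]
      rw [mul_comm]; exact h
  · exact Finset.prod_nonneg fun v _ => by split_ifs <;> [exact hX v; exact hY v]
  · exact Finset.prod_nonneg fun v _ => by split_ifs <;> [exact hX v; exact hY v]
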